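/- Let K' ⊂ ℝ^n be a bounded nonempty set, let L ⊆ ℝ^n be a linear subspace of dimension L, and let P : ℝ^n → ℝ^L be the matrix of an orthogonal projection onto L expressed in an orthonormal basis of L (so that PᵀP is the orthogonal projection onto L and P Pᵀ = I_L). Then the Gaussian mean width satisfies w(P(K')) ≤ 2 w(K'), where w(S) = E sup_{u ∈ S} ⟨g, u⟩ for g a standard Gaussian vector of the appropriate dimension. -/

import Mathlib

open MeasureTheory ProbabilityTheory

/-- Gaussian mean width of a subset of `Fin d → ℝ`. -/
noncomputable def gaussianMeanWidth {d : ℕ} (S : Set (Fin d → ℝ)) : ℝ :=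
  ∫ g, sSup ((fun u => ∑ i, g i * u i) '' S) ∂(Measure.pi fun _ : Fin d => gaussianReal 0 1)

lemma gmw_map {n L : ℕ} (A : Matrix (Fin L) (Fin n) ℝ) (hA : A * A.transpose = 1) :
    MeasurePreserving (fun x : Fin n → ℝ => A.mulVec x)
      (Measure.pi fun _ : Fin n => gaussianReal 0 1)
      (Measure.pi fun _ : Fin L => gaussianReal 0 1) := by
  have hm : Measurable (fun x : Fin n → ℝ => A.mulVec x) :=
    (Continuous.matrix_mulVec continuous_const continuous_id).measurable
  refine ⟨hm, ?_⟩
  have key : ((Measure.pi fun _ : Fin n => gaussianReal 0 1).map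
      (fun x : Fin n → ℝ => A.mulVec x)).map (WithLp.toLp 2) =
      (Measure.pi fun _ : Fin L => gaussianReal 0 1).map (WithLp.toLp 2) := by
    rw [map_pi_eq_stdGaussian]
    apply Measure.ext_of_charFun (E := EuclideanSpace ℝ (Fin L))
    ext t
    have h1 : charFun (((Measure.pi fun _ : Fin n => gaussianReal 0 1).map
      (fun x : Fin n → ℝ => A.mulVec x)).map (WithLp.toLp 2)) t =
      charFun ((Measure.pi fun _ : Fin n => gaussianReal 0 1).map (WithLp.toLp 2))
        (WithLp.toLp 2 (A.transpose.mulVec t.ofLp) : EuclideanSpace ℝ (Fin n)) := by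
      rw [charFun_apply, charFun_apply, Measure.map_map (by fun_prop) hm,
        integral_map (by fun_prop) (Measurable.aestronglyMeasurable (by fun_prop)),
        integral_map (by fun_prop) (Measurable.aestronglyMeasurable (by fun_prop))]
      congr 1
      ext x
      congr 3
      simp only [EuclideanSpace.inner_eq_star_dotProduct, Function.comp]
      simp [Matrix.mulVec_transpose, Matrix.dotProduct_mulVec]
    rw [h1, map_pi_eq_stdGaussian, charFun_stdGaussian, charFun_stdGaussian]
    congr 4
    have h2 : ‖(WithLp.toLp 2 (A.transpose.mulVec t.ofLp) : EuclideanSpace ℝ (Fin n))‖ ^ 2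
        = ‖t‖ ^ 2 := by
      rw [← real_inner_self_eq_norm_sq, ← real_inner_self_eq_norm_sq]
      simp only [EuclideanSpace.inner_eq_star_dotProduct]
      simp only [star_trivial]
      rw [Matrix.dotProduct_mulVec, Matrix.vecMul_transpose, Matrix.mulVec_mulVec, hA,
        Matrix.one_mulVec]
    exact congrArg _ <| (sq_eq_sq₀ (norm_nonneg _) (norm_nonneg _)).1 h2
  have := congrArg (fun m => Measure.map (WithLp.ofLp) m) key
  simp only at this
  rw [Measure.map_map (by fun_prop) (by fun_prop), Measure.map_map (μ := Measure.pi fun _ : Fin L => gaussianReal 0 1) (by fun_prop) (by fun_prop)] at this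
  have hid (k : ℕ) : (WithLp.ofLp ∘ WithLp.toLp 2 : (Fin k → ℝ) → (Fin k → ℝ)) = id := rfl
  simp only [hid, Function.id_comp, Measure.map_id] at this
  exact this

noncomputable def gmwSup {d : ℕ} (S : Set (Fin d → ℝ)) (g : Fin d → ℝ) : ℝ :=
  sSup ((fun u => ∑ i, g i * u i) '' S)

lemma gmw_bound {d : ℕ} {S : Set (Fin d → ℝ)} (hb : Bornology.IsBounded S) :
    ∃ C : NNReal, ∀ u ∈ S, ∀ g : Fin d → ℝ, ∑ i, g i * u i ≤ C * ‖g‖ := by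
  obtain ⟨C, hC⟩ := hb.exists_norm_le
  refine ⟨Real.toNNReal (d * |C|), fun u hu g => ?_⟩
  rw [Real.coe_toNNReal _ (by positivity)]
  calc ∑ i, g i * u i ≤ ∑ i : Fin d, ‖g‖ * |C| := by
        refine Finset.sum_le_sum fun i _ => ?_
        refine (le_abs_self _).trans ?_
        rw [abs_mul]
        exact mul_le_mul (norm_le_pi_norm g i)
          ((norm_le_pi_norm u i).trans ((hC u hu).trans (le_abs_self _)))
          (abs_nonneg _) (norm_nonneg _)
    _ = d * |C| * ‖g‖ := by simp; ring

lemma gmw_le_sup {d : ℕ} {S : Set (Fin d → ℝ)} (hb : Bornology.IsBounded S)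
    {u : Fin d → ℝ} (hu : u ∈ S) (g : Fin d → ℝ) : ∑ i, g i * u i ≤ gmwSup S g := by
  obtain ⟨C, hC⟩ := gmw_bound hb
  refine le_csSup ⟨C * ‖g‖, ?_⟩ ⟨u, hu, rfl⟩
  rintro _ ⟨v, hv, rfl⟩
  exact hC v hv g

lemma gmw_sup_le {d : ℕ} {S : Set (Fin d → ℝ)} (hne : S.Nonempty)
    {g : Fin d → ℝ} {M : ℝ} (h : ∀ u ∈ S, ∑ i, g i * u i ≤ M) : gmwSup S g ≤ M := by
  refine csSup_le (hne.image _) ?_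
  rintro _ ⟨v, hv, rfl⟩
  exact h v hv

lemma gmw_lip {d : ℕ} {S : Set (Fin d → ℝ)} (hne : S.Nonempty) (hb : Bornology.IsBounded S) :
    ∃ C : NNReal, LipschitzWith C (gmwSup S) := by
  obtain ⟨C, hC⟩ := gmw_bound hb
  refine ⟨C, LipschitzWith.of_le_add_mul C fun x y => gmw_sup_le hne fun u hu => ?_⟩
  have h1 := gmw_le_sup hb hu y
  have h2 := hC u hu (x - y)
  rw [dist_eq_norm]
  have h3 : ∑ i, x i * u i = ∑ i, y i * u i + ∑ i, (x - y) i * u i := by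
    rw [← Finset.sum_add_distrib]
    refine Finset.sum_congr rfl fun i _ => ?_
    simp only [Pi.sub_apply]; ring
  linarith

lemma gmw_integrable {d : ℕ} {S : Set (Fin d → ℝ)} (hne : S.Nonempty)
    (hb : Bornology.IsBounded S) :
    Integrable (gmwSup S) (Measure.pi fun _ : Fin d => gaussianReal 0 1) := by
  obtain ⟨C, hC⟩ := gmw_lip hne hb
  have hi : Integrable (fun x : Fin d → ℝ => x) (Measure.pi fun _ : Fin d => gaussianReal 0 1) :=
    Integrable.of_eval fun i => integrable_eval (i := i) IsGaussian.integrable_id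
  refine Integrable.mono' ((hi.norm.const_mul (C : ℝ)).add (integrable_const ‖gmwSup S 0‖))
    hC.continuous.aestronglyMeasurable (Filter.Eventually.of_forall fun x => ?_)
  have h := hC.dist_le_mul x 0
  rw [dist_eq_norm, dist_zero_right] at h
  have h2 := norm_sub_norm_le (gmwSup S x) (gmwSup S 0)
  simp only [Pi.add_apply]
  linarith

lemma gmw_comp {n L : ℕ} {S : Set (Fin L → ℝ)} (hne : S.Nonempty)
    (hb : Bornology.IsBounded S) (A : Matrix (Fin L) (Fin n) ℝ) (hA : A * A.transpose = 1) :
    Integrable (fun x => gmwSup S (A.mulVec x)) (Measure.pi fun _ : Fin n => gaussianReal 0 1) ∧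
    gaussianMeanWidth S =
      ∫ x, gmwSup S (A.mulVec x) ∂(Measure.pi fun _ : Fin n => gaussianReal 0 1) := by
  have hm := gmw_map A hA
  have hi := gmw_integrable hne hb
  refine ⟨hm.integrable_comp_of_integrable hi, ?_⟩
  have h := integral_map (f := gmwSup S) hm.measurable.aemeasurable
    (by rw [hm.map_eq]; exact hi.aestronglyMeasurable)
  rw [hm.map_eq] at h
  exact h

theorem gmw_projection_le {n L : ℕ} (K' : Set (Fin n → ℝ)) (hne : K'.Nonempty)
    (hbdd : Bornology.IsBounded K') (P : Matrix (Fin L) (Fin n) ℝ)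
    (hP : P * P.transpose = 1) :
    gaussianMeanWidth ((fun u => P.mulVec u) '' K') ≤ 2 * gaussianMeanWidth K' := by
  have hbP : Bornology.IsBounded ((fun u => P.mulVec u) '' K') := by
    have := (LinearMap.toContinuousLinearMap (Matrix.mulVecLin P)).lipschitz.isBounded_image hbdd
    exact this
  obtain ⟨-, eP⟩ := gmw_comp (hne.image _) hbP P hP
  obtain ⟨iP, -⟩ := gmw_comp (hne.image _) hbP P hP
  obtain ⟨i1, e1⟩ := gmw_comp hne hbdd (1 : Matrix (Fin n) (Fin n) ℝ) (by simp)
  obtain ⟨i2, e2⟩ := gmw_comp hne hbdd (-1 : Matrix (Fin n) (Fin n) ℝ) (by simp)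
  have hR : (P.transpose * P + P.transpose * P - 1) *
      (P.transpose * P + P.transpose * P - 1).transpose = 1 := by
    have h : P.transpose * P * (P.transpose * P) = P.transpose * P := by
      rw [Matrix.mul_assoc, ← Matrix.mul_assoc P, hP, Matrix.one_mul]
    simp only [Matrix.transpose_sub, Matrix.transpose_add, Matrix.transpose_mul,
      Matrix.transpose_transpose, Matrix.transpose_one, Matrix.mul_sub, Matrix.sub_mul,
      Matrix.mul_add, Matrix.add_mul, h, Matrix.mul_one, Matrix.one_mul]
    abel
  obtain ⟨i3, e3⟩ := gmw_comp hne hbdd _ hR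
  have hnn : 0 ≤ gaussianMeanWidth K' + gaussianMeanWidth K' := by
    nth_rewrite 1 [e1]
    rw [e2, ← integral_add i1 i2]
    refine integral_nonneg fun x => ?_
    obtain ⟨u, hu⟩ := hne
    have h1 := gmw_le_sup hbdd hu ((1 : Matrix (Fin n) (Fin n) ℝ).mulVec x)
    have h2 := gmw_le_sup hbdd hu ((-1 : Matrix (Fin n) (Fin n) ℝ).mulVec x)
    simp only [Matrix.one_mulVec, Matrix.neg_mulVec, Pi.neg_apply, neg_mul,
      Finset.sum_neg_distrib, Pi.zero_apply] at h1 h2 ⊢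
    linarith
  have hmain : gaussianMeanWidth ((fun u => P.mulVec u) '' K') +
      gaussianMeanWidth ((fun u => P.mulVec u) '' K') ≤
      gaussianMeanWidth K' + gaussianMeanWidth K' := by
    nth_rewrite 1 [e1]
    rw [eP, e3, ← integral_add i1 i3, ← integral_add iP iP]
    refine integral_mono (iP.add iP) (i1.add i3) fun x => ?_
    simp only
    suffices h : gmwSup ((fun u => P.mulVec u) '' K') (P.mulVec x) ≤
        (gmwSup K' ((1 : Matrix (Fin n) (Fin n) ℝ).mulVec x) +
        gmwSup K' ((P.transpose * P + P.transpose * P - 1).mulVec x)) / 2 by linarith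
    refine gmw_sup_le (hne.image _) ?_
    rintro _ ⟨u, hu, rfl⟩
    have h1 := gmw_le_sup hbdd hu ((1 : Matrix (Fin n) (Fin n) ℝ).mulVec x)
    have h2 := gmw_le_sup hbdd hu ((P.transpose * P + P.transpose * P - 1).mulVec x)
    have h3 : ∑ i, P.mulVec x i * P.mulVec u i = ∑ i, (P.transpose * P).mulVec x i * u i := by
      change P.mulVec x ⬝ᵥ P.mulVec u = (P.transpose * P).mulVec x ⬝ᵥ u
      rw [Matrix.dotProduct_mulVec, ← Matrix.mulVec_mulVec, Matrix.mulVec_transpose]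
    simp only [Matrix.sub_mulVec, Matrix.add_mulVec, Matrix.one_mulVec, Pi.add_apply,
      Pi.sub_apply, add_mul, sub_mul, Finset.sum_add_distrib, Finset.sum_sub_distrib] at h1 h2 ⊢
    linarith
  linarith
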